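/- Let H be a 2-vertex-connected undirected graph with a DFS tree T rooted at r, let v be a vertex of H, and let e be a back-edge. Then {v,e} is a vertex-edge cut-pair of H if and only if there is a child c of v in T such that e joins a descendant of c to a proper ancestor of v and e is the only back-edge joining a descendant of c to a proper ancestor of v. -/

import Mathlib

/-- A DFS tree of the graph `H`, rooted at `r`, given by a parent function:
it is a spanning tree (every vertex reaches the root by iterating the parent
function, and each non-root vertex is adjacent to its parent), and every edge
of `H` joins a vertex to one of its ancestors. -/
structure DFSTree {V : Type*} (H : SimpleGraph V) (r : V) where
  par : V → V
  par_root : par r = r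
  reaches_root : ∀ v : V, ∃ n : ℕ, par^[n] v = r
  par_adj : ∀ v : V, v ≠ r → H.Adj v (par v)
  edge_anc : ∀ x y : V, H.Adj x y → (∃ n : ℕ, par^[n] x = y) ∨ (∃ n : ℕ, par^[n] y = x)

namespace DFSTree

variable {V : Type*} {H : SimpleGraph V} {r : V} (T : DFSTree H r)

/-- `a` is an ancestor of `b` (every vertex is an ancestor of itself). -/
def Anc (a b : V) : Prop := ∃ n : ℕ, T.par^[n] b = a

/-- `a` is a proper ancestor of `b`. -/
def PAnc (a b : V) : Prop := T.Anc a b ∧ a ≠ b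

/-- `(x,y)` is a back-edge: an edge of `H` from `x` to an ancestor `y` of `x`
which is not the tree edge from `x` to its parent. -/
def BackEdge (x y : V) : Prop := H.Adj x y ∧ T.Anc y x ∧ T.par x ≠ y

/-- The set of descendants of `v` joined by a back-edge to a proper ancestor of `v`. -/
def MSet (v : V) : Set V := {x | T.Anc v x ∧ ∃ y, T.PAnc y v ∧ T.BackEdge x y}

/-- `m = M(v)`: `m` is the nearest common ancestor of all descendants of `v`
joined by a back-edge to a proper ancestor of `v`. -/
def IsM (v m : V) : Prop :=
  (∀ x ∈ T.MSet v, T.Anc m x) ∧ ∀ m' : V, (∀ x ∈ T.MSet v, T.Anc m' x) → T.Anc m' m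

/-- The set of descendants of `v` joined by a back-edge to a proper ancestor of `p(v)`. -/
def MpSet (v : V) : Set V := {x | T.Anc v x ∧ ∃ y, T.PAnc y (T.par v) ∧ T.BackEdge x y}

/-- `m = M_p(v)`: `m` is the nearest common ancestor of all descendants of `v`
joined by a back-edge to a proper ancestor of `p(v)`. -/
def IsMp (v m : V) : Prop :=
  (∀ x ∈ T.MpSet v, T.Anc m x) ∧ ∀ m' : V, (∀ x ∈ T.MpSet v, T.Anc m' x) → T.Anc m' m

/-- `h = high(v)`: `h` is the deepest proper ancestor of `v` joined by a
back-edge to a descendant of `v`. -/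
def IsHigh (v h : V) : Prop :=
  T.PAnc h v ∧ (∃ x, T.Anc v x ∧ T.BackEdge x h) ∧
    ∀ h' : V, T.PAnc h' v → (∃ x, T.Anc v x ∧ T.BackEdge x h') → T.Anc h' h

/-- `h = high_p(v)`: `h` is the deepest proper ancestor of `p(v)` joined by a
back-edge to a descendant of `v`. -/
def IsHighP (v h : V) : Prop :=
  T.PAnc h (T.par v) ∧ (∃ x, T.Anc v x ∧ T.BackEdge x h) ∧
    ∀ h' : V, T.PAnc h' (T.par v) → (∃ x, T.Anc v x ∧ T.BackEdge x h') → T.Anc h' h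

/-- `l = low(v)`: `l` is the proper ancestor of `v` nearest to the root joined
by a back-edge to a descendant of `v`. -/
def IsLow (v l : V) : Prop :=
  T.PAnc l v ∧ (∃ x, T.Anc v x ∧ T.BackEdge x l) ∧
    ∀ l' : V, T.PAnc l' v → (∃ x, T.Anc v x ∧ T.BackEdge x l') → T.Anc l l'

end DFSTree

/-- `{v, e}` is a vertex-edge cut-pair of `H`: `e` is an edge of `H` and deleting
both `v` (with its incident edges) and `e` disconnects `H`. -/
def VECutPair {V : Type*} (H : SimpleGraph V) (v : V) (e : Sym2 V) : Prop :=
  e ∈ H.edgeSet ∧ ¬ ((H.deleteEdges {e}).induce {u | u ≠ v}).Connected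

/-- `{e, e'}` is a cut-pair of `H`: `e` and `e'` are distinct edges of `H` whose
deletion disconnects `H`. -/
def ECutPair {V : Type*} (H : SimpleGraph V) (e e' : Sym2 V) : Prop :=
  e ∈ H.edgeSet ∧ e' ∈ H.edgeSet ∧ e ≠ e' ∧ ¬ (H.deleteEdges {e, e'}).Connected

/-- An undirected graph is 2-edge-connected if it is connected and has no bridge. -/
def TwoEdgeConnected {W : Type*} (G : SimpleGraph W) : Prop :=
  G.Connected ∧ ∀ e ∈ G.edgeSet, ¬ G.IsBridge e

/-- An undirected graph is 2-vertex-connected if it has at least three vertices,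
is connected, and deleting any single vertex leaves it connected. -/
def TwoVertexConnected {W : Type*} (G : SimpleGraph W) : Prop :=
  3 ≤ Nat.card W ∧ G.Connected ∧ ∀ v : W, (G.induce {u | u ≠ v}).Connected

/-!
Deleting the back-edge `e` keeps `T` a DFS tree, so the claim is about deleting a vertex `v` from
the graph `H - e` with its DFS tree. As `H - v` is connected, `{v, e}` is a cut-pair exactly when
the two ends of `e` differ from `v` and lie in different components of `H - e - v`. The tree path
between the ends of `e` joins them unless `v` lies on it, that is, unless `e` leads from the
subtree of a child `c` of `v` to a proper ancestor of `v`. In that case both the subtree of `c`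
and the set of proper ancestors of `v` are connected by tree edges, and the edges leaving the
subtree of `c` go to `v` or are back-edges to proper ancestors of `v`. So the ends of `e` are
separated exactly when `e` was the only such back-edge.
-/

theorem connected_induce_deleteEdges_singleton_iff {V : Type*} {G : SimpleGraph V} {S : Set V}
    (hS : (G.induce S).Connected) {x y : V} :
    ((G.deleteEdges {s(x, y)}).induce S).Connected ↔
      ∀ (hx : x ∈ S) (hy : y ∈ S),
        ((G.deleteEdges {s(x, y)}).induce S).Reachable ⟨x, hx⟩ ⟨y, hy⟩ := by
  refine ⟨fun h hx hy => h.preconnected _ _, fun hxy => ?_⟩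
  have reachable_of_adj : ∀ a b : S, (G.induce S).Adj a b →
      ((G.deleteEdges {s(x, y)}).induce S).Reachable a b := by
    rintro ⟨a, ha⟩ ⟨b, hb⟩ hab
    by_cases he : s(a, b) = s(x, y)
    · rcases Sym2.eq_iff.1 he with ⟨rfl, rfl⟩ | ⟨rfl, rfl⟩
      · exact hxy ha hb
      · exact (hxy hb ha).symm
    · exact SimpleGraph.Adj.reachable (SimpleGraph.deleteEdges_adj.2 ⟨hab, he⟩)
  have := hS.nonempty
  refine ⟨fun a b => ?_⟩
  simp only [SimpleGraph.reachable_iff_reflTransGen] at reachable_of_adj ⊢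
  exact Relation.reflTransGen_closed reachable_of_adj _ _
    ((SimpleGraph.reachable_iff_reflTransGen a b).1 (hS.preconnected a b))

namespace DFSTree

variable {V : Type*} {H : SimpleGraph V} {r : V} {T : DFSTree H r} {a b c v x y : V}

theorem Anc.refl (a : V) : T.Anc a a := ⟨0, rfl⟩

theorem par_anc (a : V) : T.Anc (T.par a) a := ⟨1, rfl⟩

theorem Anc.trans (hab : T.Anc a b) (hbc : T.Anc b c) : T.Anc a c := by
  obtain ⟨m, rfl⟩ := hab
  obtain ⟨n, rfl⟩ := hbc
  exact ⟨m + n, Function.iterate_add_apply _ _ _ _⟩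

theorem anc_iterate_par_of_le {m n : ℕ} (hmn : m ≤ n) (a : V) :
    T.Anc (T.par^[n] a) (T.par^[m] a) :=
  ⟨n - m, by rw [← Function.iterate_add_apply, Nat.sub_add_cancel hmn]⟩

theorem eq_root_of_anc_root (h : T.Anc a r) : a = r := by
  obtain ⟨n, rfl⟩ := h
  exact Function.iterate_fixed T.par_root n

theorem eq_root_of_isPeriodicPt_par {n : ℕ} (hn : 0 < n)
    (h : Function.IsPeriodicPt T.par n a) : a = r := by
  obtain ⟨N, hN⟩ := T.reaches_root a
  have hanc := anc_iterate_par_of_le (T := T) (Nat.le_mul_of_pos_right N hn) a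
  rw [(h.const_mul N).eq, hN] at hanc
  exact eq_root_of_anc_root hanc

theorem Anc.antisymm (hab : T.Anc a b) (hba : T.Anc b a) : a = b := by
  obtain ⟨m, rfl⟩ := hab
  obtain ⟨n, hn⟩ := hba
  rcases m.eq_zero_or_pos with rfl | hm
  · rfl
  · obtain rfl : b = r := eq_root_of_isPeriodicPt_par (Nat.add_pos_right n hm)
      ((Function.iterate_add_apply _ _ _ _).trans hn)
    exact Function.iterate_fixed T.par_root m

theorem Anc.total (hax : T.Anc a x) (hbx : T.Anc b x) : T.Anc a b ∨ T.Anc b a := by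
  obtain ⟨m, rfl⟩ := hax
  obtain ⟨n, rfl⟩ := hbx
  exact (le_total n m).imp (anc_iterate_par_of_le · x) (anc_iterate_par_of_le · x)

theorem PAnc.anc_par (h : T.PAnc a b) : T.Anc a (T.par b) := by
  obtain ⟨⟨n, hn⟩, hne⟩ := h
  cases n with
  | zero => exact absurd hn.symm hne
  | succ n => exact ⟨n, hn⟩

theorem not_anc_par (hc : c ≠ r) : ¬ T.Anc c (T.par c) := fun h =>
  (T.par_adj c hc).ne (h.antisymm (par_anc c))

theorem PAnc.exists_child (h : T.PAnc v x) : ∃ c, T.par c = v ∧ c ≠ r ∧ T.Anc c x := by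
  obtain ⟨⟨n, hn⟩, hne⟩ := h
  induction n generalizing x with
  | zero => exact absurd hn.symm hne
  | succ n ih =>
    by_cases hx : T.par x = v
    · refine ⟨x, hx, ?_, Anc.refl x⟩
      rintro rfl
      exact hne (hx.symm.trans T.par_root)
    · obtain ⟨c, hcv, hcr, hcx⟩ := ih (Ne.symm hx) hn
      exact ⟨c, hcv, hcr, hcx.trans (par_anc x)⟩

theorem BackEdge.par_edge_ne (h : T.BackEdge x y) (a : V) : s(a, T.par a) ≠ s(x, y) := by
  obtain ⟨hadj, hyx, hpar⟩ := h
  intro he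
  rcases Sym2.eq_iff.1 he with ⟨rfl, hp⟩ | ⟨rfl, rfl⟩
  · exact hpar hp
  · exact hadj.ne ((par_anc a).antisymm hyx)

/-- The tree `T`, seen as a DFS tree of the graph without the back-edge `s(x, y)`. It has the same
parent function, so its ancestor relation is by definition that of `T`. -/
def deleteBackEdge (T : DFSTree H r) (h : T.BackEdge x y) :
    DFSTree (H.deleteEdges {s(x, y)}) r where
  par := T.par
  par_root := T.par_root
  reaches_root := T.reaches_root
  par_adj a ha := SimpleGraph.deleteEdges_adj.2 ⟨T.par_adj a ha, h.par_edge_ne a⟩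
  edge_anc a b hab := T.edge_anc a b (SimpleGraph.deleteEdges_adj.1 hab).1

theorem backEdge_deleteBackEdge_iff (h : T.BackEdge x y) :
    (T.deleteBackEdge h).BackEdge a b ↔ T.BackEdge a b ∧ s(a, b) ≠ s(x, y) := by
  simp only [BackEdge, SimpleGraph.deleteEdges_adj, Set.mem_singleton_iff]
  exact and_right_comm

theorem Anc.reachable_induce_ne {a b : {u | u ≠ v}} (hab : T.Anc a b)
    (hv : ¬ (T.Anc a v ∧ T.Anc v b)) : (H.induce {u | u ≠ v}).Reachable b a := by
  obtain ⟨a, ha⟩ := a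
  obtain ⟨b, hb⟩ := b
  obtain ⟨n, hn⟩ := hab
  dsimp only at hn hv
  induction n generalizing b with
  | zero =>
    obtain rfl : b = a := hn
    exact SimpleGraph.Reachable.refl _
  | succ n ih =>
    rw [Function.iterate_succ_apply] at hn
    by_cases hbr : b = r
    · subst hbr
      rw [T.par_root] at hn
      exact ih b hb hv hn
    have hpar : T.par b ≠ v := by
      rintro rfl
      exact hv ⟨⟨n, hn⟩, par_anc b⟩
    have hadj : (H.induce {u | u ≠ v}).Adj ⟨b, hb⟩ ⟨T.par b, hpar⟩ := T.par_adj b hbr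
    exact hadj.reachable.trans
      (ih (T.par b) hpar (fun h => hv ⟨h.1, h.2.trans (par_anc b)⟩) hn)

theorem reachable_induce_ne_of_anc_of_anc {a b : {u | u ≠ v}} (ha : T.Anc a v) (hb : T.Anc b v) :
    (H.induce {u | u ≠ v}).Reachable a b := by
  rcases ha.total hb with hab | hba
  · exact (hab.reachable_induce_ne fun h => b.2 (hb.antisymm h.2)).symm
  · exact hba.reachable_induce_ne fun h => a.2 (ha.antisymm h.2)

theorem backEdge_and_pAnc_of_adj (hab : H.Adj a b) (ha : T.Anc c a) (hb : ¬ T.Anc c b)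
    (hbc : b ≠ T.par c) : T.BackEdge a b ∧ T.PAnc b (T.par c) := by
  have hba : T.Anc b a := (T.edge_anc a b hab).resolve_right fun h => hb (ha.trans h)
  have hpAnc : T.PAnc b c :=
    ⟨(hba.total ha).resolve_right hb, fun h => hb (h ▸ Anc.refl b)⟩
  have hpar : T.par a ≠ b := by
    rintro rfl
    have hca : c ≠ a := fun h => hbc (h ▸ rfl)
    exact hb (PAnc.anc_par ⟨ha, hca⟩)
  exact ⟨⟨hab, hba, hpar⟩, hpAnc.anc_par, hbc⟩

theorem reachable_induce_ne_par_iff (hc : c ≠ r) {x y : {u | u ≠ T.par c}} (hx : T.Anc c x)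
    (hy : T.Anc y (T.par c)) :
    (H.induce {u | u ≠ T.par c}).Reachable x y ↔
      ∃ x' y', T.BackEdge x' y' ∧ T.Anc c x' ∧ T.PAnc y' (T.par c) := by
  constructor
  · rintro ⟨p⟩
    obtain ⟨d, -, hfst, hsnd⟩ := p.exists_boundary_dart {u | T.Anc c u} hx
      fun h => not_anc_par hc (h.trans hy)
    obtain ⟨hback, hpAnc⟩ := backEdge_and_pAnc_of_adj (T := T) d.adj hfst hsnd d.snd.2
    exact ⟨_, _, hback, hfst, hpAnc⟩
  · rintro ⟨x', y', hback, hx', hy'⟩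
    have hx'_ne : x' ≠ T.par c := fun h => not_anc_par hc (h ▸ hx')
    have reachable_child : ∀ {z : {u | u ≠ T.par c}}, T.Anc c z →
        (H.induce {u | u ≠ T.par c}).Reachable z ⟨c, (T.par_adj c hc).ne⟩ :=
      fun hz => Anc.reachable_induce_ne hz fun h => not_anc_par hc h.1
    have hadj : (H.induce {u | u ≠ T.par c}).Adj ⟨x', hx'_ne⟩ ⟨y', hy'.2⟩ := hback.1
    exact (reachable_child hx).trans <| (reachable_child hx').symm.trans <|
      hadj.reachable.trans <| reachable_induce_ne_of_anc_of_anc hy'.1 hy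

end DFSTree

open DFSTree in
theorem stmt_10_general {V : Type*} {H : SimpleGraph V} {r : V} (T : DFSTree H r) {v x y : V}
    (hv : (H.induce {u | u ≠ v}).Connected) (hbe : T.BackEdge x y) :
    VECutPair H v s(x, y) ↔
      ∃ c : V, T.par c = v ∧ c ≠ r ∧ T.Anc c x ∧ T.PAnc y v ∧
        ∀ x' y' : V, T.BackEdge x' y' → T.Anc c x' → T.PAnc y' v →
          s(x', y') = s(x, y) := by
  let T' := T.deleteBackEdge hbe
  constructor
  · rintro ⟨-, hcut⟩
    rw [connected_induce_deleteEdges_singleton_iff hv] at hcut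
    push Not at hcut
    obtain ⟨hx, hy, hxy⟩ := hcut
    obtain ⟨hyv, hvx⟩ : T.Anc y v ∧ T.Anc v x := by
      by_contra h
      exact hxy (Anc.reachable_induce_ne (T := T') hbe.2.1 h)
    obtain ⟨c, rfl, hcr, hcx⟩ := PAnc.exists_child ⟨hvx, Ne.symm hx⟩
    refine ⟨c, rfl, hcr, hcx, ⟨hyv, hy⟩, fun x' y' hback hx' hy' => ?_⟩
    by_contra hne
    exact hxy ((reachable_induce_ne_par_iff (T := T') (x := ⟨x, hx⟩) (y := ⟨y, hy⟩) hcr hcx hyv).2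
      ⟨x', y', (backEdge_deleteBackEdge_iff hbe).2 ⟨hback, hne⟩, hx', hy'⟩)
  · rintro ⟨c, rfl, hcr, hcx, hy, huniq⟩
    refine ⟨hbe.1, fun hconn => ?_⟩
    have hx : x ≠ T.par c := fun h => not_anc_par hcr (h ▸ hcx)
    obtain ⟨x', y', hback', hx', hy'⟩ :=
      (reachable_induce_ne_par_iff (T := T') (x := ⟨x, hx⟩) (y := ⟨y, hy.2⟩) hcr hcx hy.1).1
        (hconn.preconnected _ _)
    obtain ⟨hback, hne⟩ := (backEdge_deleteBackEdge_iff hbe).1 hback'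
    exact hne (huniq x' y' hback hx' hy')

theorem stmt_10 {V : Type*} [Fintype V] (H : SimpleGraph V) (r : V)
    (T : DFSTree H r) (hH : TwoVertexConnected H) (v x y : V)
    (hbe : T.BackEdge x y) :
    VECutPair H v s(x, y) ↔
      ∃ c : V, T.par c = v ∧ c ≠ r ∧ T.Anc c x ∧ T.PAnc y v ∧
        ∀ x' y' : V, T.BackEdge x' y' → T.Anc c x' → T.PAnc y' v →
          s(x', y') = s(x, y) :=
  stmt_10_general T (hH.2.2 v) hbe
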